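/- For all p, p' ∈ ℍ₀, the products σi·1·p·p' and p·I·p' lie in ℍ₁, and one has A₁(σi·1·p·p') = −A₀(p)·A₀(p') and A₁(p·I·p') = A₀(p)·diag(−1, 1)·A₀(p'). -/

import Mathlib

noncomputable section

/-! ### The algebra `𝒜` of Lorentz (split-complex) numbers.

We realize `𝒜` (the real algebra with basis `{1, σ}`, `σ² = 1`) in split coordinates:
`(x, y) : ℝ × ℝ` represents `u + σ v` with `x = u + v`, `y = u - v`.  Multiplication is then
componentwise, `1 = (1,1)`, and `σ = (1, -1)` satisfies `σ² = 1`. -/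

abbrev LorentzA : Type := ℝ × ℝ

/-- The element `σ ∈ 𝒜`, with `σ² = 1`, `σ ∉ ℝ·1`. -/
def sA : LorentzA := (1, -1)

/-- The element `u + σ v` of `𝒜`. -/
def mkA (u v : ℝ) : LorentzA := (u + v, u - v)

/-- The inclusion `ℝ ⊆ 𝒜`, `t ↦ t·1`. -/
def toA (t : ℝ) : LorentzA := (t, t)

/-- Conjugation of `𝒜`: `u + σ v ↦ u - σ v` (the swap, in split coordinates). -/
def conjA (a : LorentzA) : LorentzA := (a.2, a.1)

/-- `|a|² := a·â = u² - v²`, as a real number (so that `a * conjA a = toA (nsqA a)`). -/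
def nsqA (a : LorentzA) : ℝ := a.1 * a.2

/-- The real part of `a = u + σ v ∈ 𝒜`, namely `u`. -/
def ReA (a : LorentzA) : ℝ := (a.1 + a.2) / 2

/-- The imaginary part of `a = u + σ v ∈ 𝒜`, namely `v`. -/
def ImA (a : LorentzA) : ℝ := (a.1 - a.2) / 2

/-- The idempotent `(1 + σ)/2` of `𝒜`. -/
def eP : LorentzA := (1 + sA) / 2

/-- The idempotent `(1 - σ)/2` of `𝒜`. -/
def eM : LorentzA := (1 - sA) / 2

/-! ### Derivatives of maps `ℝ² → 𝒜` and `ℝ² → ℝ`. -/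

/-- `∂_u f`. -/
def duA (f : ℝ × ℝ → LorentzA) (x : ℝ × ℝ) : LorentzA := fderiv ℝ f x (1, 0)

/-- `∂_v f`. -/
def dvA (f : ℝ × ℝ → LorentzA) (x : ℝ × ℝ) : LorentzA := fderiv ℝ f x (0, 1)

/-- `∂_a f = ½ (∂_u f + σ ∂_v f)`. -/
def Da (f : ℝ × ℝ → LorentzA) (x : ℝ × ℝ) : LorentzA := ((2:ℝ)⁻¹) • (duA f x + sA * dvA f x)

/-- `∂_â f = ½ (∂_u f - σ ∂_v f)`.  A map is conformal iff `∂_â f = 0`. -/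
def Dahat (f : ℝ × ℝ → LorentzA) (x : ℝ × ℝ) : LorentzA := ((2:ℝ)⁻¹) • (duA f x - sA * dvA f x)

/-- `∂_u f` for real-valued `f`. -/
def duR (f : ℝ × ℝ → ℝ) (x : ℝ × ℝ) : ℝ := fderiv ℝ f x (1, 0)

/-- `∂_v f` for real-valued `f`. -/
def dvR (f : ℝ × ℝ → ℝ) (x : ℝ × ℝ) : ℝ := fderiv ℝ f x (0, 1)

/-- `∂²f/∂u²`. -/
def duuR (f : ℝ × ℝ → ℝ) (x : ℝ × ℝ) : ℝ := fderiv ℝ (fun y => fderiv ℝ f y (1, 0)) x (1, 0)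

/-- `∂²f/∂v²`. -/
def dvvR (f : ℝ × ℝ → ℝ) (x : ℝ × ℝ) : ℝ := fderiv ℝ (fun y => fderiv ℝ f y (0, 1)) x (0, 1)

/-- The wave operator `□ f = -∂²f/∂u² + ∂²f/∂v²`. -/
def boxR (f : ℝ × ℝ → ℝ) (x : ℝ × ℝ) : ℝ := -duuR f x + dvvR f x

/-! ### 2×2 matrices over `𝒜`. -/

abbrev M2A := Matrix (Fin 2) (Fin 2) LorentzA

/-- The conjugate transpose `B*` of `B ∈ M₂(𝒜)`. -/
def ctrans (B : M2A) : M2A := (B.map conjA).transpose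

/-- `Herm₂(𝒜) = {B ∈ M₂(𝒜) : B = B*}`. -/
def Herm2 : Set M2A := {B | B = ctrans B}

/-- `SL₂(𝒜) = {B ∈ M₂(𝒜) : det B = 1}`. -/
def SL2A : Set M2A := {B | B.det = 1}

/-- The inclusion `M₂(ℝ) ⊆ M₂(𝒜)`. -/
def mR (C : Matrix (Fin 2) (Fin 2) ℝ) : M2A := C.map toA

/-! ### The complexified Lorentz numbers `𝒜_ℂ = 𝒜 ⊗ ℂ ≅ ℂ × ℂ` (split coordinates),
and the quaternions `ℍ^{𝒜_ℂ}` with coefficients in `𝒜_ℂ`. -/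

abbrev AC : Type := ℂ × ℂ

/-- `σ ∈ 𝒜_ℂ`. -/
def sC : AC := (1, -1)

/-- The complex unit `i ∈ 𝒜_ℂ`. -/
def iC : AC := (Complex.I, Complex.I)

/-- Conjugation `u + σ v ↦ u - σ v` (`u, v ∈ ℂ`) of `𝒜_ℂ`. -/
def hatC (z : AC) : AC := (z.2, z.1)

/-- The inclusion `ℝ ⊆ 𝒜_ℂ`. -/
def rc (t : ℝ) : AC := ((t : ℂ), (t : ℂ))

/-- The inclusion `𝒜 ⊆ 𝒜_ℂ`. -/
def toAC (a : LorentzA) : AC := ((a.1 : ℂ), (a.2 : ℂ))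

/-- `a ↦ i·a`, the image of `𝒜` in `i·𝒜 ⊆ 𝒜_ℂ`. -/
def iAC (a : LorentzA) : AC := (Complex.I * a.1, Complex.I * a.2)

/-- `ℍ^{𝒜_ℂ}`: quaternions `ζ₀·1 + ζ₁·I + ζ₂·J + ζ₃·K` with `ζᵢ ∈ 𝒜_ℂ`,
`I² = J² = K² = -1`, `IJ = -JI = K`. -/
abbrev HAC := Quaternion AC

/-- The scalar quaternion `z·1`. -/
def qscalar (z : AC) : HAC := ⟨z, 0, 0, 0⟩

/-- The quaternion unit `I`. -/
def qI : HAC := ⟨0, 1, 0, 0⟩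

/-- The quaternion unit `J`. -/
def qJ : HAC := ⟨0, 0, 1, 0⟩

/-- The quaternion unit `K`. -/
def qK : HAC := ⟨0, 0, 0, 1⟩

/-- `ζ̂`: apply `𝒜_ℂ`-conjugation to each coefficient of a quaternion.
(Quaternionic conjugation `ζ̄` is `star ζ`.) -/
def qhat (q : HAC) : HAC := ⟨hatC q.re, hatC q.imI, hatC q.imJ, hatC q.imK⟩

/-- `H(ζ, ζ') = ½(ζ ζ̄' + ζ' ζ̄) = ζ₀ζ₀' + ζ₁ζ₁' + ζ₂ζ₂' + ζ₃ζ₃' ∈ 𝒜_ℂ`. -/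
def Hform (q q' : HAC) : AC := q.re * q'.re + q.imI * q'.imI + q.imJ * q'.imJ + q.imK * q'.imK

/-- `p₀·1 + i p₁·I + p₂·J + i p₃·K` with `pᵢ ∈ 𝒜`: the generic element of `ℍ₀`. -/
def mk0 (p₀ p₁ p₂ p₃ : LorentzA) : HAC :=
  qscalar (toAC p₀) + qscalar (iAC p₁) * qI + qscalar (toAC p₂) * qJ + qscalar (iAC p₃) * qK

/-- `i q₀·1 + q₁·I + i q₂·J + q₃·K` with `qᵢ ∈ 𝒜`: the generic element of `ℍ₁`. -/
def mk1 (q₀ q₁ q₂ q₃ : LorentzA) : HAC :=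
  qscalar (iAC q₀) + qscalar (toAC q₁) * qI + qscalar (iAC q₂) * qJ + qscalar (toAC q₃) * qK

/-- `ℍ₀ = {p₀·1 + i p₁·I + p₂·J + i p₃·K : pᵢ ∈ 𝒜} ⊆ ℍ^{𝒜_ℂ}`. -/
def H0set : Set HAC := {ζ | ∃ p₀ p₁ p₂ p₃ : LorentzA, ζ = mk0 p₀ p₁ p₂ p₃}

/-- `ℍ₁ = {i q₀·1 + q₁·I + i q₂·J + q₃·K : qᵢ ∈ 𝒜} ⊆ ℍ^{𝒜_ℂ}`. -/
def H1set : Set HAC := {ζ | ∃ q₀ q₁ q₂ q₃ : LorentzA, ζ = mk1 q₀ q₁ q₂ q₃}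

/-- `Spin(2,2) = {p ∈ ℍ₀ : H(p,p) = 1}`. -/
def SpinSet : Set HAC := {p | p ∈ H0set ∧ Hform p p = 1}

/-- Extraction of the `𝒜`-coefficient of an element of `𝒜 ⊆ 𝒜_ℂ`. -/
def reEx (z : AC) : LorentzA := (z.1.re, z.2.re)

/-- Extraction of the `𝒜`-coefficient of an element of `i·𝒜 ⊆ 𝒜_ℂ`. -/
def imEx (z : AC) : LorentzA := (z.1.im, z.2.im)

/-- The map `A₀ : ℍ₀ → M₂(𝒜)`,
`p₀·1 + i p₁·I + p₂·J + i p₃·K ↦ [[p₀ - σp₁, p₂ - σp₃], [-p₂ - σp₃, p₀ + σp₁]]`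
(written via coefficient extraction, so that it is a total function on `ℍ^{𝒜_ℂ}`
agreeing with `A₀` on `ℍ₀`). -/
def A0 (ζ : HAC) : M2A :=
  !![reEx ζ.re - sA * imEx ζ.imI, reEx ζ.imJ - sA * imEx ζ.imK;
     -reEx ζ.imJ - sA * imEx ζ.imK, reEx ζ.re + sA * imEx ζ.imI]

/-- The map `A₁ : ℍ₁ → M₂(𝒜)`,
`i q₀·1 + q₁·I + i q₂·J + q₃·K ↦ [[-q₁ - σq₀, -q₃ - σq₂], [-q₃ + σq₂, q₁ - σq₀]]`. -/
def A1 (ζ : HAC) : M2A :=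
  !![-reEx ζ.imI - sA * imEx ζ.re, -reEx ζ.imK - sA * imEx ζ.imJ;
     -reEx ζ.imK + sA * imEx ζ.imJ, reEx ζ.imI - sA * imEx ζ.re]

lemma qscalar_re (z : AC) : (qscalar z).re = z := rfl
lemma qscalar_imI (z : AC) : (qscalar z).imI = 0 := rfl
lemma qscalar_imJ (z : AC) : (qscalar z).imJ = 0 := rfl
lemma qscalar_imK (z : AC) : (qscalar z).imK = 0 := rfl
lemma qI_re : (qI).re = 0 := rfl
lemma qI_imI : (qI).imI = 1 := rfl
lemma qI_imJ : (qI).imJ = 0 := rfl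
lemma qI_imK : (qI).imK = 0 := rfl
lemma qJ_re : (qJ).re = 0 := rfl
lemma qJ_imI : (qJ).imI = 0 := rfl
lemma qJ_imJ : (qJ).imJ = 1 := rfl
lemma qJ_imK : (qJ).imK = 0 := rfl
lemma qK_re : (qK).re = 0 := rfl
lemma qK_imI : (qK).imI = 0 := rfl
lemma qK_imJ : (qK).imJ = 0 := rfl
lemma qK_imK : (qK).imK = 1 := rfl

lemma mk0_re (a b c d : LorentzA) : (mk0 a b c d).re = toAC a := by
  simp [mk0, qscalar_re, qscalar_imI, qscalar_imJ, qscalar_imK,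
    qI_re, qI_imI, qI_imJ, qI_imK, qJ_re, qJ_imI, qJ_imJ, qJ_imK,
    qK_re, qK_imI, qK_imJ, qK_imK]

lemma mk0_imI (a b c d : LorentzA) : (mk0 a b c d).imI = iAC b := by
  simp [mk0, qscalar_re, qscalar_imI, qscalar_imJ, qscalar_imK,
    qI_re, qI_imI, qI_imJ, qI_imK, qJ_re, qJ_imI, qJ_imJ, qJ_imK,
    qK_re, qK_imI, qK_imJ, qK_imK]

lemma mk0_imJ (a b c d : LorentzA) : (mk0 a b c d).imJ = toAC c := by
  simp [mk0, qscalar_re, qscalar_imI, qscalar_imJ, qscalar_imK,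
    qI_re, qI_imI, qI_imJ, qI_imK, qJ_re, qJ_imI, qJ_imJ, qJ_imK,
    qK_re, qK_imI, qK_imJ, qK_imK]

lemma mk0_imK (a b c d : LorentzA) : (mk0 a b c d).imK = iAC d := by
  simp [mk0, qscalar_re, qscalar_imI, qscalar_imJ, qscalar_imK,
    qI_re, qI_imI, qI_imJ, qI_imK, qJ_re, qJ_imI, qJ_imJ, qJ_imK,
    qK_re, qK_imI, qK_imJ, qK_imK]

lemma mk1_re (a b c d : LorentzA) : (mk1 a b c d).re = iAC a := by
  simp [mk1, qscalar_re, qscalar_imI, qscalar_imJ, qscalar_imK,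
    qI_re, qI_imI, qI_imJ, qI_imK, qJ_re, qJ_imI, qJ_imJ, qJ_imK,
    qK_re, qK_imI, qK_imJ, qK_imK]

lemma mk1_imI (a b c d : LorentzA) : (mk1 a b c d).imI = toAC b := by
  simp [mk1, qscalar_re, qscalar_imI, qscalar_imJ, qscalar_imK,
    qI_re, qI_imI, qI_imJ, qI_imK, qJ_re, qJ_imI, qJ_imJ, qJ_imK,
    qK_re, qK_imI, qK_imJ, qK_imK]

lemma mk1_imJ (a b c d : LorentzA) : (mk1 a b c d).imJ = iAC c := by
  simp [mk1, qscalar_re, qscalar_imI, qscalar_imJ, qscalar_imK,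
    qI_re, qI_imI, qI_imJ, qI_imK, qJ_re, qJ_imI, qJ_imJ, qJ_imK,
    qK_re, qK_imI, qK_imJ, qK_imK]

lemma mk1_imK (a b c d : LorentzA) : (mk1 a b c d).imK = toAC d := by
  simp [mk1, qscalar_re, qscalar_imI, qscalar_imJ, qscalar_imK,
    qI_re, qI_imI, qI_imJ, qI_imK, qJ_re, qJ_imI, qJ_imJ, qJ_imK,
    qK_re, qK_imI, qK_imJ, qK_imK]

lemma mem_H1 (z : HAC) (h0 : z.re = iAC (imEx z.re)) (h1 : z.imI = toAC (reEx z.imI))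
    (h2 : z.imJ = iAC (imEx z.imJ)) (h3 : z.imK = toAC (reEx z.imK)) : z ∈ H1set := by
  refine ⟨imEx z.re, reEx z.imI, imEx z.imJ, reEx z.imK, ?_⟩
  apply Quaternion.ext
  · rw [mk1_re]; exact h0
  · rw [mk1_imI]; exact h1
  · rw [mk1_imJ]; exact h2
  · rw [mk1_imK]; exact h3

set_option maxHeartbeats 2000000 in
/-- For all `p, p' ∈ ℍ₀`, the products `σi·1·p·p'` and `p·I·p'` lie in `ℍ₁`,
`A₁(σi·1·p·p') = -A₀(p)·A₀(p')` and `A₁(p·I·p') = A₀(p)·diag(-1,1)·A₀(p')`. -/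
theorem stmt5 (p p' : HAC) (hp : p ∈ H0set) (hp' : p' ∈ H0set) :
    qscalar (sC * iC) * p * p' ∈ H1set ∧
    p * qI * p' ∈ H1set ∧
    A1 (qscalar (sC * iC) * p * p') = -(A0 p * A0 p') ∧
    A1 (p * qI * p') = A0 p * !![(-1 : LorentzA), 0; 0, 1] * A0 p' := by
  obtain ⟨a, b, c, d, rfl⟩ := hp
  obtain ⟨a', b', c', d', rfl⟩ := hp'
  refine ⟨?_, ?_, ?_, ?_⟩
  · apply mem_H1 <;> ext1 <;> apply Complex.ext <;>
      simp [mk0_re, mk0_imI, mk0_imJ, mk0_imK,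
        qscalar_re, qscalar_imI, qscalar_imJ, qscalar_imK, sC, iC, toAC, iAC, reEx, imEx]
  · apply mem_H1 <;> ext1 <;> apply Complex.ext <;>
      simp [mk0_re, mk0_imI, mk0_imJ, mk0_imK,
        qI_re, qI_imI, qI_imJ, qI_imK, toAC, iAC, reEx, imEx]
  · ext i j <;> fin_cases i <;> fin_cases j <;>
      simp [A0, A1, mk0_re, mk0_imI, mk0_imJ, mk0_imK,
        qscalar_re, qscalar_imI, qscalar_imJ, qscalar_imK, sC, iC, sA, toAC, iAC, reEx, imEx] <;> ring
  · ext i j <;> fin_cases i <;> fin_cases j <;>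
      simp [A0, A1, mk0_re, mk0_imI, mk0_imJ, mk0_imK,
        qI_re, qI_imI, qI_imJ, qI_imK, sA, toAC, iAC, reEx, imEx] <;> ring
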